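/- Let μ = μ₁ × ⋯ × μ_n ∈ 𝒲(ℝⁿ) be a PS measure, where μ_i = f_i·L¹ with each f_i continuous on ℝ and f_i > 0 everywhere (so μ has density f(x₁,…,x_n) = f₁(x₁)⋯f_n(x_n)). Then each f_i is symmetric: for every i = 1,…,n there exists m_i ∈ ℝ such that f_i(m_i − t) = f_i(m_i + t) for all t ∈ ℝ. -/

import Mathlib

/-!
The half-space `{c ≤ xᵢ}` has weighted perimeter `Fᵢ(c) · Cᵢ`, where `Cᵢ` is the product of the
total masses of the other factors (`perim_halfSpace`), and its complement `{xᵢ < c}` has perimeter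
at most that (`perim_lt_le`).
Symmetrizing `{xᵢ < c}` in the direction `eᵢ` yields `{d ≤ xᵢ}`, where `d` is determined by
`∫_{[d,∞)} Fᵢ = ∫_{(-∞,c)} Fᵢ` (`ehrhardSymm_lt`). The PS property therefore says `Fᵢ(d) ≤ Fᵢ(c)`.
The relation between `c` and `d` is symmetric, so `Fᵢ(d) = Fᵢ(c)`.

Writing `d = T(c)`, the map `T` is a decreasing involution, and differentiating the mass balance
gives `T'(c) = -Fᵢ(c) / Fᵢ(T(c)) = -1`. Hence `T(c) = 2m - c` for some `m`, and `Fᵢ ∘ T = Fᵢ` is the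
claimed symmetry (`symmetric_of_tails`).

The perimeter of a half-space is computed without traces. Multiplying a test field by smooth
approximations of the indicator of `{c ≤ xᵢ}` and using the weak gradient identity expresses the
pairing as a limit of integrals of `f φᵢ` against densities in `xᵢ` concentrating at `c`
(`tendsto_boundary`); the product structure of `f` and the continuity of `Fᵢ` give the limit.
-/

open MeasureTheory Set Filter
open scoped ENNReal RealInnerProductSpace Topology

noncomputable section

/-- Euclidean space ℝⁿ. -/
abbrev En (n : ℕ) := EuclideanSpace ℝ (Fin n)

/-- Divergence of a vector field on ℝⁿ. -/
noncomputable def dvg {n : ℕ} (φ : En n → En n) (x : En n) : ℝ :=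
  ∑ i : Fin n, fderiv ℝ φ x (EuclideanSpace.single i 1) i

/-- `f'` is the (weak) gradient of `f`, and both are locally integrable;
this encodes `f ∈ W^{1,1}_loc(ℝⁿ)` with weak gradient `∇f = f'`. -/
def HasWeakGrad {n : ℕ} (f : En n → ℝ) (f' : En n → En n) : Prop :=
  LocallyIntegrable f volume ∧ LocallyIntegrable f' volume ∧
    ∀ φ : En n → En n, ContDiff ℝ 1 φ → HasCompactSupport φ →
      (∫ x, f x * dvg φ x) = - ∫ x, ⟪φ x, f' x⟫

/-- Membership of `μ = f·Lⁿ` in the class `𝒲(ℝⁿ)`: the density `f` is non-negative,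
integrable and lies in `W^{1,1}_loc(ℝⁿ)` with weak gradient `f'`. -/
def MemW {n : ℕ} (f : En n → ℝ) (f' : En n → En n) : Prop :=
  (∀ x, 0 ≤ f x) ∧ Integrable f volume ∧ HasWeakGrad f f'

/-- Admissible test vector fields: `C¹`, compactly supported in `U`, sup-norm at most 1. -/
def IsTestField {n : ℕ} (U : Set (En n)) (φ : En n → En n) : Prop :=
  ContDiff ℝ 1 φ ∧ HasCompactSupport φ ∧ tsupport φ ⊆ U ∧ ∀ x, ‖φ x‖ ≤ 1

/-- The weighted variation `‖g‖_{BV_μ(U)}` (valued in `ℝ≥0∞`;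
membership in `BV_μ(U)` means that this quantity is finite). -/
noncomputable def bvVar {n : ℕ} (f : En n → ℝ) (f' : En n → En n) (U : Set (En n))
    (g : En n → ℝ) : ℝ≥0∞ :=
  ⨆ (φ : En n → En n) (_ : IsTestField U φ),
    ENNReal.ofReal (∫ x in U, g x * (f x * dvg φ x + ⟪φ x, f' x⟫))

/-- The weighted perimeter `Per_μ(E; U)`. -/
noncomputable def perim {n : ℕ} (f : En n → ℝ) (f' : En n → En n) (U : Set (En n))
    (E : Set (En n)) : ℝ≥0∞ :=
  bvVar f f' U (E.indicator fun _ => (1 : ℝ))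

/-- The measure `μ = f·Lⁿ`. -/
noncomputable def muM {n : ℕ} (f : En n → ℝ) : Measure (En n) :=
  volume.withDensity fun x => ENNReal.ofReal (f x)

/-- One-dimensional generalized Ehrhard symmetrization of `A ⊆ ℝ` in direction `v ∈ {−1,+1}`
with respect to a measure `ν` on `ℝ`: the largest half-line `{t : v·t ≥ c}` of `ν`-measure
`ν A` (with the conventions `∅`, `ℝ` when `c = ±∞`). -/
def ehrhard1D (ν : Measure ℝ) (v : ℝ) (A : Set ℝ) : Set ℝ :=
  {t | ∀ b : ℝ, (∀ c : ℝ, ν {y | c ≤ v * y} ≤ ν A → b ≤ c) → b ≤ v * t}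

/-- The weighted measure `f·H¹` on the fiber `{x + t·v : t ∈ ℝ}`, identified with `ℝ`. -/
noncomputable def fiberMeasure {n : ℕ} (f : En n → ℝ) (x v : En n) : Measure ℝ :=
  (volume : Measure ℝ).withDensity fun t => ENNReal.ofReal (f (x + t • v))

/-- Generalized `v`-Ehrhard symmetrization of `E ⊆ ℝⁿ` with respect to `μ = f·Lⁿ`:
on each fiber over `v^⊥` one replaces `E` by the largest half-line in direction `v`
of the same weighted measure. -/
def ehrhardSymm {n : ℕ} (f : En n → ℝ) (v : En n) (E : Set (En n)) : Set (En n) :=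
  {z | ⟪z, v⟫ ∈
      ehrhard1D (fiberMeasure f (z - ⟪z, v⟫ • v) v) 1
        {t | (z - ⟪z, v⟫ • v) + t • v ∈ E}}

/-- `μ = f·Lⁿ` is a perimeter symmetrization (PS) measure: generalized Ehrhard
symmetrization does not increase the weighted perimeter of sets of finite `μ`-perimeter. -/
def IsPSMeasure {n : ℕ} (f : En n → ℝ) (f' : En n → En n) : Prop :=
  ∀ v : En n, ‖v‖ = 1 → ∀ E : Set (En n), NullMeasurableSet E volume →
    perim f f' univ E < ⊤ →
      perim f f' univ (ehrhardSymm f v E) ≤ perim f f' univ E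

/-- The half-space `H(v, r) = {x : x·v ≥ r}`. -/
def halfSpace {n : ℕ} (v : En n) (r : ℝ) : Set (En n) := {x | r ≤ ⟪x, v⟫}

/-- `H_μ(E, v)`: the largest half-space in direction `v` with `μ`-measure `μ(E)`. -/
def halfSpaceOf {n : ℕ} (f : En n → ℝ) (E : Set (En n)) (v : En n) : Set (En n) :=
  {x | ∀ b : ℝ, (∀ c : ℝ, muM f (halfSpace v c) ≤ muM f E → b ≤ c) → b ≤ ⟪x, v⟫}

/-- `g'` is the weak derivative of `g : ℝ → ℝ` (so `g ∈ W^{1,1}_loc(ℝ)`). -/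
def HasWeakDeriv (g g' : ℝ → ℝ) : Prop :=
  LocallyIntegrable g volume ∧ LocallyIntegrable g' volume ∧
    ∀ φ : ℝ → ℝ, ContDiff ℝ 1 φ → HasCompactSupport φ →
      (∫ t, g t * deriv φ t) = - ∫ t, φ t * g' t

/-! ### Integrals of product functions -/

theorem integral_En_prod {n : ℕ} (H : Fin n → ℝ → ℝ) :
    ∫ x : En n, ∏ j, H j (x j) = ∏ j, ∫ t, H j t := by
  rw [← integral_fintype_prod_volume_eq_prod]
  exact (PiLp.volume_preserving_ofLp (Fin n)).integral_comp
    (MeasurableEquiv.toLp 2 (Fin n → ℝ)).symm.measurableEmbedding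
    (fun y : Fin n → ℝ => ∏ j, H j (y j))

theorem integrable_En_prod {n : ℕ} {H : Fin n → ℝ → ℝ} (hH : ∀ j, Integrable (H j)) :
    Integrable (fun x : En n => ∏ j, H j (x j)) :=
  ((PiLp.volume_preserving_ofLp (Fin n)).integrable_comp_emb
    (MeasurableEquiv.toLp 2 (Fin n → ℝ)).symm.measurableEmbedding).2
    (Integrable.fintype_prod hH)

/-- By Fubini the positive number `∫ f` is the product of the integrals of the factors; a
non-integrable factor would make this product `0`, the Bochner integral being `0` in that case. -/
theorem integrable_factor {n : ℕ} {F : Fin n → ℝ → ℝ} {f : En n → ℝ}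
    (hprod : ∀ x : En n, f x = ∏ i, F i (x i)) (hf : Integrable f)
    (hpos : ∀ i t, 0 < F i t) (i : Fin n) : Integrable (F i) := by
  have hfpos : ∀ x, 0 < f x := fun x => by
    rw [hprod]; exact Finset.prod_pos fun j _ => hpos j _
  have h0 : 0 < ∫ x, f x := by
    rw [integral_pos_iff_support_of_nonneg (fun x => (hfpos x).le) hf]
    have : Function.support f = univ := by
      ext x; simp [(hfpos x).ne']
    rw [this]
    exact isOpen_univ.measure_pos _ univ_nonempty
  simp_rw [hprod] at h0
  rw [integral_En_prod] at h0
  by_contra hi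
  exact h0.ne' (Finset.prod_eq_zero (Finset.mem_univ i) (integral_undef hi))

/-! ### The weak gradient identity with a cutoff in one coordinate -/

theorem contDiff_coord {n : ℕ} (i : Fin n) : ContDiff ℝ 1 (fun x : En n => x i) := by
  fun_prop

/-- Product rule for the divergence of a field multiplied by a function of one coordinate. -/
theorem dvg_coord_smul {n : ℕ} (i : Fin n) {χ : ℝ → ℝ} (hχ : ContDiff ℝ 1 χ)
    {φ : En n → En n} (hφ : ContDiff ℝ 1 φ) (x : En n) :
    dvg (fun x => χ (x i) • φ x) x = χ (x i) * dvg φ x + deriv χ (x i) * φ x i := by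
  have h1 : HasFDerivAt (fun x : En n => x i)
      (EuclideanSpace.proj i : En n →L[ℝ] ℝ) x :=
    (EuclideanSpace.proj i : En n →L[ℝ] ℝ).hasFDerivAt
  have h2 := ((hχ.differentiable one_ne_zero (x i)).hasDerivAt).comp_hasFDerivAt x h1
  have h3 := h2.smul (hφ.differentiable one_ne_zero x).hasFDerivAt
  have h4 : fderiv ℝ (fun x => χ (x i) • φ x) x = _ := h3.fderiv
  simp only [dvg, h4]
  have h5 : ∀ j : Fin n, (((χ ∘ fun x : En n => x i) x • fderiv ℝ φ x +
      (deriv χ (x i) • (EuclideanSpace.proj i : En n →L[ℝ] ℝ)).smulRight (φ x))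
        (EuclideanSpace.single j 1)) j =
      χ (x i) * fderiv ℝ φ x (EuclideanSpace.single j 1) j +
        if i = j then deriv χ (x i) * φ x j else 0 := fun j => by
    by_cases hij : i = j
    · subst hij; simp
    · simp [hij]
  simp_rw [h5, Finset.sum_add_distrib, Finset.mul_sum]
  simp

theorem continuous_dvg {n : ℕ} {φ : En n → En n} (hφ : ContDiff ℝ 1 φ) :
    Continuous (dvg φ) := by
  have := hφ.continuous_fderiv one_ne_zero
  unfold dvg
  fun_prop

theorem hasCompactSupport_dvg {n : ℕ} {φ : En n → En n} (hφ : HasCompactSupport φ) :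
    HasCompactSupport (dvg φ) := by
  refine (hφ.fderiv (𝕜 := ℝ)).mono fun x hx => ?_
  contrapose! hx
  simp only [Function.mem_support, not_not] at hx ⊢
  simp [dvg, hx]

theorem integrable_mul_dvg {n : ℕ} {f : En n → ℝ} {f' : En n → En n} (hW : HasWeakGrad f f')
    {φ : En n → En n} (hφ : ContDiff ℝ 1 φ) (hc : HasCompactSupport φ) :
    Integrable (fun x => f x * dvg φ x) :=
  hW.1.integrable_smul_right_of_hasCompactSupport (continuous_dvg hφ) (hasCompactSupport_dvg hc)

theorem integrable_inner_grad {n : ℕ} {f : En n → ℝ} {f' : En n → En n} (hW : HasWeakGrad f f')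
    {φ : En n → En n} (hφ : ContDiff ℝ 1 φ) (hc : HasCompactSupport φ) :
    Integrable (fun x => ⟪φ x, f' x⟫) := by
  have h0 : LocallyIntegrable (fun x => ‖f' x‖) (volume : Measure (En n)) := fun x => by
    obtain ⟨s, hs, h⟩ := hW.2.1 x
    exact ⟨s, hs, h.norm⟩
  have h := h0.integrable_smul_right_of_hasCompactSupport hφ.continuous.norm hc.norm
  refine h.mono (hφ.continuous.aestronglyMeasurable.inner hW.2.1.aestronglyMeasurable) ?_
  refine Eventually.of_forall fun x => ?_
  have := norm_inner_le_norm (𝕜 := ℝ) (φ x) (f' x)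
  simpa [mul_comm] using this

/-- The weak gradient identity tested on `χ(xᵢ) φ`. -/
theorem integral_cutoff {n : ℕ} {f : En n → ℝ} {f' : En n → En n} (hW : HasWeakGrad f f')
    (i : Fin n) {χ : ℝ → ℝ} (hχ : ContDiff ℝ 1 χ)
    {φ : En n → En n} (hφ : ContDiff ℝ 1 φ) (hc : HasCompactSupport φ) :
    ∫ x, χ (x i) * (f x * dvg φ x + ⟪φ x, f' x⟫) =
      - ∫ x, f x * (deriv χ (x i) * φ x i) := by
  obtain ⟨ψ, hψ⟩ : ∃ ψ : En n → En n, ψ = fun x => χ (x i) • φ x := ⟨_, rfl⟩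
  have hφ' : ContDiff ℝ 1 ψ := by
    rw [hψ]; exact (hχ.comp (contDiff_coord i)).smul hφ
  have hc' : HasCompactSupport ψ := by
    rw [hψ]; exact HasCompactSupport.smul_left (f := fun x : En n => χ (x i)) hc
  have key := hW.2.2 ψ hφ' hc'
  have I1 := integrable_mul_dvg hW hφ' hc'
  have I2 := integrable_inner_grad hW hφ' hc'
  have hcs : HasCompactSupport (fun x : En n => deriv χ (x i) * φ x i) := by
    refine hc.mono fun x hx => ?_
    contrapose! hx
    simp only [Function.mem_support, not_not] at hx ⊢
    simp [hx]
  have hct : Continuous (fun x : En n => deriv χ (x i) * φ x i) := by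
    have h1 := hχ.continuous_deriv_one
    have h2 := hφ.continuous
    fun_prop
  have I3 : Integrable (fun x => f x * (deriv χ (x i) * φ x i)) :=
    hW.1.integrable_smul_right_of_hasCompactSupport hct hcs
  have e : ∀ x, χ (x i) * (f x * dvg φ x + ⟪φ x, f' x⟫) =
      (f x * dvg ψ x + ⟪ψ x, f' x⟫) - f x * (deriv χ (x i) * φ x i) := fun x => by
    rw [hψ, dvg_coord_smul i hχ hφ, real_inner_smul_left]; ring
  rw [integral_congr_ae (Eventually.of_forall e)]
  refine (integral_sub (I1.add I2) I3).trans ?_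
  have h := integral_add I1 I2
  simp only [Pi.add_apply]
  rw [h, key]
  ring

/-! ### Smooth approximation of the indicator of a half-line -/

/-- A smooth probability density on `ℝ`, the derivative of the (reflected) smooth step. -/
def peak (s : ℝ) : ℝ := deriv Real.smoothTransition (1 - s)

theorem smoothTransition_contDiff_one : ContDiff ℝ 1 Real.smoothTransition :=
  Real.smoothTransition.contDiff (n := 1)

theorem peak_continuous : Continuous peak := by
  have := smoothTransition_contDiff_one.continuous_deriv_one
  unfold peak; fun_prop

theorem peak_nonneg (s : ℝ) : 0 ≤ peak s := Real.smoothTransition.monotone.deriv_nonneg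

theorem peak_hasCompactSupport : HasCompactSupport peak := by
  refine HasCompactSupport.intro (K := Icc (0:ℝ) 1) isCompact_Icc fun s hs => ?_
  rw [mem_Icc, not_and_or, not_le, not_le] at hs
  unfold peak
  rcases hs with hs | hs
  · have : Real.smoothTransition =ᶠ[𝓝 (1 - s)] fun _ => 1 := by
      filter_upwards [lt_mem_nhds (show 1 < 1 - s by linarith)] with t ht
      exact Real.smoothTransition.one_of_one_le ht.le
    rw [this.deriv_eq]; simp
  · have : Real.smoothTransition =ᶠ[𝓝 (1 - s)] fun _ => 0 := by
      filter_upwards [gt_mem_nhds (show 1 - s < 0 by linarith)] with t ht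
      exact Real.smoothTransition.zero_of_nonpos ht.le
    rw [this.deriv_eq]; simp

theorem integral_peak : ∫ s, peak s = 1 := by
  have hd : ∀ s, HasDerivAt (fun s => - Real.smoothTransition (1 - s)) (peak s) s := fun s => by
    have h1 := (smoothTransition_contDiff_one.differentiable one_ne_zero (1 - s)).hasDerivAt
    have h2 : HasDerivAt (fun s : ℝ => 1 - s) (-1) s := by
      simpa using (hasDerivAt_id s).const_sub 1
    have h3 := (h1.comp s h2).neg
    rw [mul_neg_one, neg_neg] at h3
    exact h3
  have hb : Tendsto (fun s => - Real.smoothTransition (1 - s)) atBot (𝓝 (-1)) := by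
    refine tendsto_const_nhds.congr' ?_
    filter_upwards [eventually_le_atBot (0:ℝ)] with s hs
    rw [Real.smoothTransition.one_of_one_le (by linarith)]
  have ht : Tendsto (fun s => - Real.smoothTransition (1 - s)) atTop (𝓝 0) := by
    refine tendsto_const_nhds.congr' ?_
    filter_upwards [eventually_ge_atTop (1:ℝ)] with s hs
    rw [Real.smoothTransition.zero_of_nonpos (by linarith)]; simp
  rw [integral_of_hasDerivAt_of_tendsto hd
    (peak_continuous.integrable_of_hasCompactSupport peak_hasCompactSupport) hb ht]
  norm_num

/-- The densities `k · peak (k (c - t))` concentrate at `c` as `k → ∞`. -/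
theorem tendsto_integral_peak {g : ℝ → ℝ} (hg : Integrable g) (hc : Continuous g) (c : ℝ) :
    Tendsto (fun k : ℝ => ∫ t, (k * peak (k * (c - t))) * g t) atTop (𝓝 (g c)) := by
  have h : Tendsto (fun x : ℝ ↦ ‖x‖ ^ Module.finrank ℝ ℝ * peak x) (Bornology.cobounded ℝ)
      (𝓝 0) := by
    refine tendsto_const_nhds.congr' ?_
    have := peak_hasCompactSupport.isCompact.isBounded
    filter_upwards [this] with x hx
    rw [image_eq_zero_of_notMem_tsupport hx, mul_zero]
  simpa using tendsto_integral_comp_smul_smul_of_integrable' (μ := volume) peak_nonneg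
    integral_peak h hg hc.continuousAt (x₀ := c)

/-- Smooth approximation of the indicator function of `[c, ∞)`. -/
def smoothStep (c k t : ℝ) : ℝ := Real.smoothTransition (k * (t - c) + 1)

theorem contDiff_smoothStep (c k : ℝ) : ContDiff ℝ 1 (smoothStep c k) := by
  unfold smoothStep
  exact smoothTransition_contDiff_one.comp (by fun_prop)

theorem deriv_smoothStep (c k t : ℝ) : deriv (smoothStep c k) t = k * peak (k * (c - t)) := by
  have h1 := (smoothTransition_contDiff_one.differentiable one_ne_zero
    (k * (t - c) + 1)).hasDerivAt
  have h2 : HasDerivAt (fun t : ℝ => k * (t - c) + 1) k t := by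
    simpa using (((hasDerivAt_id t).sub_const c).const_mul k).add_const 1
  have h3 : HasDerivAt (smoothStep c k) _ t := h1.comp t h2
  rw [h3.deriv, peak, mul_comm]
  congr 2; ring

theorem tendsto_smoothStep (c t : ℝ) :
    Tendsto (fun k => smoothStep c k t) atTop (𝓝 (if c ≤ t then 1 else 0)) := by
  refine tendsto_const_nhds.congr' ?_
  split_ifs with h
  · filter_upwards [eventually_ge_atTop (0:ℝ)] with k hk
    rw [smoothStep, Real.smoothTransition.one_of_one_le]
    nlinarith [mul_nonneg hk (sub_nonneg.2 h)]
  · filter_upwards [eventually_ge_atTop (1 / (c - t))] with k hk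
    rw [smoothStep, Real.smoothTransition.zero_of_nonpos]
    rw [div_le_iff₀ (by linarith)] at hk
    linarith

/-- The pairing of a test field with the half-space `{c ≤ xᵢ}` is the limit of the fluxes of `f φ`
through the thin layers `c - 1/k ≤ xᵢ ≤ c`; it replaces the trace of `f φ` on the hyperplane. -/
theorem tendsto_boundary {n : ℕ} {f : En n → ℝ} {f' : En n → En n} (hW : HasWeakGrad f f')
    (i : Fin n) (c : ℝ) {φ : En n → En n} (hφ : ContDiff ℝ 1 φ) (hc : HasCompactSupport φ) :
    Tendsto (fun k => - ∫ x, f x * (k * peak (k * (c - x i)) * φ x i)) atTop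
      (𝓝 (∫ x, {x : En n | c ≤ x i}.indicator (fun _ => (1:ℝ)) x *
        (f x * dvg φ x + ⟪φ x, f' x⟫))) := by
  have I := (integrable_mul_dvg hW hφ hc).add (integrable_inner_grad hW hφ hc)
  have h := tendsto_integral_filter_of_dominated_convergence (μ := (volume : Measure (En n)))
    (l := (atTop : Filter ℝ))
    (F := fun k x => smoothStep c k (x i) * (f x * dvg φ x + ⟪φ x, f' x⟫))
    (f := fun x => {x : En n | c ≤ x i}.indicator (fun _ => (1:ℝ)) x *
        (f x * dvg φ x + ⟪φ x, f' x⟫))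
    (fun x => ‖f x * dvg φ x + ⟪φ x, f' x⟫‖)
    (Eventually.of_forall fun k =>
      (((contDiff_smoothStep c k).continuous.comp (contDiff_coord i).continuous
        ).aestronglyMeasurable).mul I.aestronglyMeasurable)
    (Eventually.of_forall fun k => Eventually.of_forall fun x => by
      rw [norm_mul]
      refine mul_le_of_le_one_left (norm_nonneg _) ?_
      rw [smoothStep, Real.norm_of_nonneg (Real.smoothTransition.nonneg _)]
      exact Real.smoothTransition.le_one _)
    I.norm
    (Eventually.of_forall fun x => by
      simpa only [indicator, mem_ofPred_eq] using (tendsto_smoothStep c (x i)).mul_const _)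
  refine h.congr fun k => ?_
  rw [integral_cutoff hW i (contDiff_smoothStep c k) hφ hc]
  simp_rw [deriv_smoothStep]

/-! ### The weighted perimeter of coordinate half-spaces -/

theorem integral_coord_mul_prod {n : ℕ} (H : Fin n → ℝ → ℝ) (i : Fin n) (g : ℝ → ℝ) :
    ∫ x : En n, g (x i) * ∏ j, H j (x j) =
      (∫ t, g t * H i t) * ∏ j ∈ Finset.univ.erase i, ∫ t, H j t := by
  have key : ∀ x : En n, g (x i) * ∏ j, H j (x j) =
      ∏ j, Function.update H i (fun t => g t * H i t) j (x j) := fun x => by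
    rw [← Finset.mul_prod_erase _ _ (Finset.mem_univ i),
      ← Finset.mul_prod_erase _ _ (Finset.mem_univ i), Function.update_self, mul_assoc]
    congr 2
    refine Finset.prod_congr rfl fun j hj => ?_
    rw [Function.update_of_ne (Finset.ne_of_mem_erase hj)]
  rw [integral_congr_ae (Eventually.of_forall key), integral_En_prod,
    ← Finset.mul_prod_erase _ _ (Finset.mem_univ i), Function.update_self]
  congr 1
  refine Finset.prod_congr rfl fun j hj => ?_
  rw [Function.update_of_ne (Finset.ne_of_mem_erase hj)]

/-- The total mass of the product of the factors other than the `i`-th one. -/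
def sideMass {n : ℕ} (F : Fin n → ℝ → ℝ) (i : Fin n) : ℝ :=
  ∏ j ∈ Finset.univ.erase i, ∫ t, F j t

/-- Each layer flux of a test field is at most the flux of `f` itself, which factorizes. -/
theorem perim_halfSpace_le {n : ℕ} {F : Fin n → ℝ → ℝ} {f : En n → ℝ} {f' : En n → En n}
    (hprod : ∀ x : En n, f x = ∏ i, F i (x i)) (hW : MemW f f')
    (hcont : ∀ i, Continuous (F i)) (hpos : ∀ i t, 0 < F i t) (i : Fin n) (c : ℝ) :
    perim f f' univ {x | c ≤ x i} ≤ ENNReal.ofReal (F i c * sideMass F i) := by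
  unfold perim bvVar
  refine iSup₂_le fun φ hφ => ENNReal.ofReal_le_ofReal ?_
  obtain ⟨hφ1, hφc, -, hφn⟩ := hφ
  rw [Measure.restrict_univ]
  have hFi := integrable_factor hprod hW.2.1 hpos i
  refine le_of_tendsto_of_tendsto (tendsto_boundary hW.2.2 i c hφ1 hφc)
    ((tendsto_integral_peak hFi (hcont i) c).mul_const (sideMass F i)) ?_
  filter_upwards [eventually_ge_atTop (0:ℝ)] with k hk
  rw [sideMass, ← integral_coord_mul_prod F i (fun t => k * peak (k * (c - t)))]
  simp_rw [← hprod]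
  rw [← integral_neg]
  obtain ⟨B, hB⟩ := peak_hasCompactSupport.exists_bound_of_continuous peak_continuous
  have hp : Continuous fun x : En n => k * peak (k * (c - x i)) := by
    have := peak_continuous
    fun_prop
  have hint : Integrable (fun x : En n => k * peak (k * (c - x i)) * f x) := by
    refine hW.2.1.bdd_mul (c := k * B) hp.aestronglyMeasurable (Eventually.of_forall fun x => ?_)
    rw [norm_mul, Real.norm_of_nonneg hk]
    exact mul_le_mul_of_nonneg_left (hB _) hk
  refine (Real.le_norm_self _).trans (norm_integral_le_of_norm_le hint (Eventually.of_forall fun x => ?_))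
  have h1 : |φ x i| ≤ 1 := (PiLp.norm_apply_le (φ x) i).trans (hφn x)
  have h2 : 0 ≤ k * peak (k * (c - x i)) := mul_nonneg hk (peak_nonneg _)
  rw [norm_neg, Real.norm_eq_abs, abs_mul, abs_mul, abs_of_nonneg (hW.1 x), abs_of_nonneg h2]
  nlinarith [mul_le_mul_of_nonneg_left h1 (mul_nonneg (hW.1 x) h2)]

/-- Smooth cutoff on `ℝ`, equal to `1` on `[-(R+1), R+1]`. -/
def cut (R : ℕ) : ContDiffBump (0 : ℝ) where
  rIn := R + 1
  rOut := R + 2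
  rIn_pos := by positivity
  rIn_lt_rOut := by linarith

theorem tendsto_cut (t : ℝ) : Tendsto (fun R => cut R t) atTop (𝓝 1) := by
  refine tendsto_const_nhds.congr' ?_
  filter_upwards [eventually_ge_atTop ⌈|t|⌉₊] with R hR
  refine ((cut R).one_of_mem_closedBall ?_).symm
  have : |t| ≤ R := (Nat.le_ceil _).trans (by exact_mod_cast hR)
  rw [mem_closedBall_zero_iff, Real.norm_eq_abs]
  show |t| ≤ (R:ℝ) + 1
  linarith

theorem integrable_mul_cut {g : ℝ → ℝ} (hg : Integrable g) (R : ℕ) :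
    Integrable (fun t => g t * cut R t) := by
  refine hg.mul_bdd (c := 1) (cut R).continuous.aestronglyMeasurable
    (Eventually.of_forall fun t => ?_)
  rw [Real.norm_of_nonneg (cut R).nonneg]
  exact (cut R).le_one

theorem tendsto_integral_cut {g : ℝ → ℝ} (hg : Integrable g) :
    Tendsto (fun R => ∫ t, g t * cut R t) atTop (𝓝 (∫ t, g t)) := by
  refine tendsto_integral_of_dominated_convergence (fun t => ‖g t‖)
    (fun R => (integrable_mul_cut hg R).aestronglyMeasurable) hg.norm
    (fun R => Eventually.of_forall fun t => ?_) (Eventually.of_forall fun t => ?_)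
  · rw [norm_mul, Real.norm_of_nonneg (cut R).nonneg]
    exact mul_le_of_le_one_right (norm_nonneg _) (cut R).le_one
  · simpa using (tendsto_cut t).const_mul (g t)

/-- A compactly supported test field exhausting `-eᵢ` as `R → ∞`. -/
def cutField {n : ℕ} (i : Fin n) (R : ℕ) (x : En n) : En n :=
  (∏ j, cut R (x j)) • EuclideanSpace.single i (-1 : ℝ)

theorem isTestField_cutField {n : ℕ} (i : Fin n) (R : ℕ) :
    IsTestField univ (cutField i R) := by
  refine ⟨?_, ?_, subset_univ _, fun x => ?_⟩
  · unfold cutField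
    have h : ContDiff ℝ 1 fun x : En n => ∏ j, cut R (x j) :=
      contDiff_prod fun j _ => (cut R).contDiff.comp (contDiff_coord j)
    exact h.smul contDiff_const
  · refine HasCompactSupport.intro (K := (WithLp.toLp 2) '' (univ.pi fun _ : Fin n =>
      Metric.closedBall (0:ℝ) (R + 2))) ?_ fun x hx => ?_
    · exact (isCompact_univ_pi fun _ => isCompact_closedBall _ _).image
        (PiLp.continuous_toLp 2 _)
    · have : ∃ j, x j ∉ Metric.closedBall (0:ℝ) (R + 2) := by
        by_contra! h
        exact hx ⟨x.ofLp, fun j _ => h j, rfl⟩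
      obtain ⟨j, hj⟩ := this
      have h0 : cut R (x j) = 0 := by
        refine (cut R).zero_of_le_dist ?_
        rw [Metric.mem_closedBall, not_le] at hj
        exact hj.le
      rw [cutField, Finset.prod_eq_zero (Finset.mem_univ j) h0, zero_smul]
  · rw [cutField, norm_smul, PiLp.norm_single, norm_neg, norm_one, mul_one,
      Real.norm_of_nonneg (Finset.prod_nonneg fun j _ => (cut R).nonneg)]
    exact Finset.prod_le_one (fun j _ => (cut R).nonneg) fun j _ => (cut R).le_one

/-- The lower bound is attained in the limit by the fields `cutField i R`, for which the layer
fluxes factorize. -/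
theorem le_perim_halfSpace {n : ℕ} {F : Fin n → ℝ → ℝ} {f : En n → ℝ} {f' : En n → En n}
    (hprod : ∀ x : En n, f x = ∏ i, F i (x i)) (hW : MemW f f')
    (hcont : ∀ i, Continuous (F i)) (hpos : ∀ i t, 0 < F i t) (i : Fin n) (c : ℝ) :
    ENNReal.ofReal (F i c * sideMass F i) ≤ perim f f' univ {x | c ≤ x i} := by
  have hFi := fun i => integrable_factor hprod hW.2.1 hpos i
  have hlim : Tendsto (fun R => F i c * cut R c * sideMass (fun j t => F j t * cut R t) i) atTop
      (𝓝 (F i c * sideMass F i)) := by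
    have := (tendsto_cut c).const_mul (F i c)
    rw [mul_one] at this
    exact this.mul (tendsto_finsetProd _ fun j _ => tendsto_integral_cut (hFi j))
  refine le_of_tendsto' (ENNReal.tendsto_ofReal hlim) fun R => ?_
  obtain ht := isTestField_cutField i R
  have hJ := tendsto_nhds_unique (tendsto_boundary hW.2.2 i c ht.1 ht.2.1)
    (((tendsto_integral_peak (integrable_mul_cut (hFi i) R)
      ((hcont i).mul (cut R).continuous) c).mul_const
        (sideMass (fun j t => F j t * cut R t) i)).congr fun k => by
      rw [sideMass, ← integral_coord_mul_prod (fun j t => F j t * cut R t) i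
        (fun t => k * peak (k * (c - t))), ← integral_neg]
      refine integral_congr_ae (Eventually.of_forall fun x => ?_)
      simp only [cutField, Finset.prod_mul_distrib, ← hprod, PiLp.smul_apply,
        PiLp.single_apply, if_true, smul_eq_mul]
      ring)
  rw [← hJ]
  unfold perim bvVar
  refine le_iSup₂_of_le (cutField i R) ht ?_
  rw [Measure.restrict_univ]

theorem perim_halfSpace {n : ℕ} {F : Fin n → ℝ → ℝ} {f : En n → ℝ} {f' : En n → En n}
    (hprod : ∀ x : En n, f x = ∏ i, F i (x i)) (hW : MemW f f')
    (hcont : ∀ i, Continuous (F i)) (hpos : ∀ i t, 0 < F i t) (i : Fin n) (c : ℝ) :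
    perim f f' univ {x | c ≤ x i} = ENNReal.ofReal (F i c * sideMass F i) :=
  (perim_halfSpace_le hprod hW hcont hpos i c).antisymm
    (le_perim_halfSpace hprod hW hcont hpos i c)

/-- The full-space pairing with a test field vanishes, so passing to the complement amounts to
replacing `φ` by `-φ`. -/
theorem perim_compl_le {n : ℕ} {f : En n → ℝ} {f' : En n → En n} (hW : HasWeakGrad f f')
    {E : Set (En n)} (hE : MeasurableSet E) :
    perim f f' univ Eᶜ ≤ perim f f' univ E := by
  unfold perim bvVar
  refine iSup₂_le fun φ hφ => ?_
  obtain ⟨hφ1, hφc, -, hφn⟩ := hφ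
  have hneg : IsTestField univ (fun x => -φ x) :=
    ⟨hφ1.neg, hφc.neg, subset_univ _, fun x => by rw [norm_neg]; exact hφn x⟩
  refine le_iSup₂_of_le _ hneg (le_of_eq ?_)
  congr 1
  rw [Measure.restrict_univ]
  have I1 := integrable_mul_dvg hW hφ1 hφc
  have I2 := integrable_inner_grad hW hφ1 hφc
  have I : Integrable (fun x => f x * dvg φ x + ⟪φ x, f' x⟫) := I1.add I2
  have h0 : ∫ x, (f x * dvg φ x + ⟪φ x, f' x⟫) = 0 := by
    have h := integral_add I1 I2
    rw [h, hW.2.2 φ hφ1 hφc]; ring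
  have hd : ∀ x, dvg (fun x => -φ x) x = - dvg φ x := fun x => by
    have : fderiv ℝ (fun x => -φ x) x = - fderiv ℝ φ x := fderiv_neg
    simp [dvg, this]
  have e : ∀ A : Set (En n), MeasurableSet A →
      ∫ x, A.indicator (fun _ => (1:ℝ)) x * (f x * dvg φ x + ⟪φ x, f' x⟫) =
      ∫ x in A, (f x * dvg φ x + ⟪φ x, f' x⟫) := fun A hA => by
    rw [← integral_indicator hA]
    refine integral_congr_ae (Eventually.of_forall fun x => ?_)
    by_cases hx : x ∈ A <;> simp [hx]
  have e2 : ∫ x, E.indicator (fun _ => (1:ℝ)) x *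
      (f x * dvg (fun x => -φ x) x + ⟪-φ x, f' x⟫) =
      - ∫ x in E, (f x * dvg φ x + ⟪φ x, f' x⟫) := by
    rw [← e E hE, ← integral_neg]
    refine integral_congr_ae (Eventually.of_forall fun x => ?_)
    simp only [hd, inner_neg_left]
    ring
  rw [e _ hE.compl, e2]
  have := integral_add_compl hE I
  linarith

theorem perim_lt_le {n : ℕ} {F : Fin n → ℝ → ℝ} {f : En n → ℝ} {f' : En n → En n}
    (hprod : ∀ x : En n, f x = ∏ i, F i (x i)) (hW : MemW f f')
    (hcont : ∀ i, Continuous (F i)) (hpos : ∀ i t, 0 < F i t) (i : Fin n) (c : ℝ) :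
    perim f f' univ {x | x i < c} ≤ ENNReal.ofReal (F i c * sideMass F i) := by
  rw [← perim_halfSpace hprod hW hcont hpos]
  have h : {x : En n | x i < c} = {x | c ≤ x i}ᶜ := by
    ext x; simp
  rw [h]
  refine perim_compl_le hW.2.2 ?_
  exact measurableSet_le measurable_const (contDiff_coord i).continuous.measurable

/-! ### Symmetrization of coordinate half-spaces -/

/-- On every fibre parallel to `eᵢ` the weight is a constant multiple of `Fᵢ`, so the symmetrization
of `{xᵢ < c}` is the half-space `{d ≤ xᵢ}` with `∫_{[d,∞)} Fᵢ = ∫_{(-∞,c)} Fᵢ`. -/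
theorem ehrhardSymm_lt {n : ℕ} {F : Fin n → ℝ → ℝ} {f : En n → ℝ}
    (hprod : ∀ x : En n, f x = ∏ i, F i (x i)) (hcont : ∀ i, Continuous (F i))
    (hpos : ∀ i t, 0 < F i t) (i : Fin n) (hint : Integrable (F i)) {c d : ℝ}
    (hcd : ∫ t in Ici d, F i t = ∫ t in Iio c, F i t) :
    ehrhardSymm f (EuclideanSpace.single i 1) {x | x i < c} = {x | d ≤ x i} := by
  ext z
  have hz : ⟪z, EuclideanSpace.single i (1:ℝ)⟫ = z i := by
    simp [EuclideanSpace.inner_single_right]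
  have hco : ∀ t : ℝ, (z - z i • EuclideanSpace.single i (1:ℝ) +
      t • EuclideanSpace.single i (1:ℝ)) i = t := fun t => by simp
  obtain ⟨K, hK, hKf⟩ : ∃ K : ℝ, 0 < K ∧ ∀ t, f (z - z i • EuclideanSpace.single i (1:ℝ) +
      t • EuclideanSpace.single i (1:ℝ)) = K * F i t := by
    refine ⟨∏ j ∈ Finset.univ.erase i, F j (z j), Finset.prod_pos fun j _ => hpos j _,
      fun t => ?_⟩
    rw [hprod, ← Finset.mul_prod_erase _ _ (Finset.mem_univ i), hco, mul_comm]
    congr 1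
    refine Finset.prod_congr rfl fun j hj => ?_
    simp [Finset.ne_of_mem_erase hj]
  have hν : ∀ A, MeasurableSet A → fiberMeasure f (z - z i • EuclideanSpace.single i (1:ℝ))
      (EuclideanSpace.single i 1) A = ENNReal.ofReal (K * ∫ t in A, F i t) := fun A hA => by
    rw [fiberMeasure, withDensity_apply _ hA]
    simp_rw [hKf]
    rw [← integral_const_mul, ofReal_integral_eq_lintegral_ofReal
      (hint.integrableOn.const_mul K)]
    exact Eventually.of_forall fun t => (mul_pos hK (hpos i t)).le
  have hnn : ∀ A : Set ℝ, 0 ≤ ∫ t in A, F i t := fun A =>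
    integral_nonneg fun t => (hpos i t).le
  have hiff : ∀ c', fiberMeasure f (z - z i • EuclideanSpace.single i (1:ℝ))
      (EuclideanSpace.single i 1) {y | c' ≤ 1 * y} ≤
      fiberMeasure f (z - z i • EuclideanSpace.single i (1:ℝ))
      (EuclideanSpace.single i 1) {t | (z - z i • EuclideanSpace.single i (1:ℝ)) +
        t • EuclideanSpace.single i (1:ℝ) ∈ {x : En n | x i < c}} ↔ d ≤ c' := fun c' => by
    have h1 : {y : ℝ | c' ≤ 1 * y} = Ici c' := by ext; simp
    have h2 : {t : ℝ | (z - z i • EuclideanSpace.single i (1:ℝ)) +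
        t • EuclideanSpace.single i (1:ℝ) ∈ {x : En n | x i < c}} = Iio c := by
      ext t; rw [mem_ofPred_eq, mem_ofPred_eq, hco]; rfl
    rw [h1, h2, hν _ measurableSet_Ici, hν _ measurableSet_Iio,
      ENNReal.ofReal_le_ofReal_iff (mul_nonneg hK.le (hnn _)), mul_le_mul_iff_right₀ hK, ← hcd]
    constructor
    · intro h
      by_contra! hlt
      have hsplit : ∫ t in Ici c', F i t = (∫ t in Ico c' d, F i t) + ∫ t in Ici d, F i t := by
        rw [← Ico_union_Ici_eq_Ici hlt.le, setIntegral_union _ measurableSet_Ici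
          hint.integrableOn hint.integrableOn]
        exact (Iio_disjoint_Ici le_rfl).mono_left Ico_subset_Iio_self
      have hp : 0 < ∫ t in Ico c' d, F i t := by
        rw [integral_Ico_eq_integral_Ioo, ← integral_Ioc_eq_integral_Ioo,
          ← intervalIntegral.integral_of_le hlt.le]
        exact intervalIntegral.intervalIntegral_pos_of_pos
          ((hcont i).intervalIntegrable _ _) (hpos i) hlt
      linarith
    · intro h
      exact setIntegral_mono_set hint.integrableOn (Eventually.of_forall fun t => (hpos i t).le)
        (Ici_subset_Ici.2 h).eventuallyLE
  unfold ehrhardSymm ehrhard1D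
  rw [mem_ofPred_eq, mem_ofPred_eq, mem_ofPred_eq, hz]
  simp_rw [hiff]
  rw [one_mul]
  exact ⟨fun h => h d fun c' hc' => hc', fun h b hb => (hb d le_rfl).trans h⟩

/-! ### One-dimensional rigidity -/

/-- A positive continuous integrable density `F` which takes equal values at any two points
cutting off equal left and right tails is symmetric. -/
theorem symmetric_of_tails {F : ℝ → ℝ} (hc : Continuous F) (hpos : ∀ t, 0 < F t)
    (hint : Integrable F)
    (h : ∀ c d, ∫ t in Ici d, F t = ∫ t in Iio c, F t → F d = F c) :
    ∃ m : ℝ, ∀ t : ℝ, F (m - t) = F (m + t) := by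
  -- `G` is the distribution function of `F`.
  set G : ℝ → ℝ := fun x => ∫ t in Iic x, F t with hG
  set M := ∫ t, F t with hM
  have hGd : ∀ x y, G y - G x = ∫ t in x..y, F t := fun x y =>
    intervalIntegral.integral_Iic_sub_Iic hint.integrableOn hint.integrableOn
  have hGder : ∀ x, HasDerivAt G (F x) x := fun x => by
    have h1 : HasDerivAt (fun y => ∫ t in x..y, F t) (F x) x :=
      intervalIntegral.integral_hasDerivAt_right (hc.intervalIntegrable _ _)
        (hc.stronglyMeasurableAtFilter _ _) hc.continuousAt
    have h2 : G = fun y => G x + ∫ t in x..y, F t := by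
      ext y; rw [← hGd]; ring
    rw [h2]
    exact h1.const_add _
  have hGmono : StrictMono G := strictMono_of_hasDerivAt_pos hGder hpos
  have hGcont : Continuous G := continuous_iff_continuousAt.2 fun x => (hGder x).continuousAt
  have hIci : ∀ x, ∫ t in Ici x, F t = M - G x := fun x => by
    rw [integral_Ici_eq_integral_Ioi]
    have := intervalIntegral.integral_Iic_add_Ioi (b := x) hint.integrableOn hint.integrableOn
    linarith
  have hIio : ∀ x, ∫ t in Iio x, F t = G x := fun x => (integral_Iic_eq_integral_Iio).symm
  have htop : Tendsto G atTop (𝓝 M) :=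
    (aecover_Iic tendsto_id).integral_tendsto_of_countably_generated hint
  have hbot : Tendsto G atBot (𝓝 0) := tendsto_integral_Iic_zero tendsto_id
  have hG0 : ∀ x, 0 < G x := fun x =>
    (hGmono.monotone.le_of_tendsto hbot (x - 1)).trans_lt (hGmono (by linarith))
  have hGM : ∀ x, G x < M := fun x =>
    (hGmono (by linarith)).trans_le (hGmono.monotone.ge_of_tendsto htop (x + 1))
  have hex : ∀ c, ∃ d, G d = M - G c := fun c => by
    have h1 : M - G c ∈ Ioo 0 M := ⟨by linarith [hGM c], by linarith [hG0 c]⟩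
    obtain ⟨a, ha⟩ := (hbot.eventually (gt_mem_nhds h1.1)).exists
    obtain ⟨b, hb⟩ := (htop.eventually (lt_mem_nhds h1.2)).exists
    exact mem_range_of_exists_le_of_exists_ge hGcont ⟨a, ha.le⟩ ⟨b, hb.le⟩
  -- `T` exchanges left and right tails of equal mass; it is a decreasing involution.
  choose T hT using hex
  have hFT : ∀ c, F (T c) = F c := fun c => h c (T c) (by rw [hIci, hIio, hT]; ring)
  have hTT : ∀ c, T (T c) = c := fun c => hGmono.injective (by rw [hT, hT]; ring)
  have hTanti : Antitone T := fun a b hab => by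
    rw [← hGmono.le_iff_le, hT, hT]
    linarith [hGmono.monotone hab]
  have hTcont : Continuous T := by
    have h1 : Monotone (fun c => - T c) := fun a b hab => neg_le_neg (hTanti hab)
    have h2 : Function.Surjective (fun c => - T c) := fun y => ⟨T (-y), by simp [hTT]⟩
    have h3 : Continuous (fun c => - - T c) := (h1.continuous_of_surjective h2).neg
    simpa only [neg_neg] using h3
  have hTinj : Function.Injective T := fun a b hab => by rw [← hTT a, hab, hTT]
  -- Differentiating `G (T c) = M - G c` gives `T' = -F c / F (T c) = -1`.
  have hTder : ∀ c, HasDerivAt T (-1) c := fun c => by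
    rw [hasDerivAt_iff_tendsto_slope]
    have s1 := (hasDerivAt_iff_tendsto_slope.1 (hGder (T c))).comp
      (hTcont.continuousAt.continuousWithinAt.tendsto_nhdsWithin (s := {c}ᶜ) (t := {T c}ᶜ)
        fun x hx => fun hh => hx (hTinj hh))
    have s2 := hasDerivAt_iff_tendsto_slope.1 (hGder c)
    have s3 := (s2.neg).div s1 (hpos _).ne'
    rw [hFT, neg_div, div_self (hpos _).ne'] at s3
    refine s3.congr' ?_
    filter_upwards [self_mem_nhdsWithin] with x hx
    have hx' : x ≠ c := hx
    have n1 : x - c ≠ 0 := sub_ne_zero.2 hx'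
    have n2 : T x - T c ≠ 0 := sub_ne_zero.2 (hTinj.ne hx')
    have n3 : G x - G c ≠ 0 := sub_ne_zero.2 (hGmono.injective.ne hx')
    simp only [Pi.div_apply, Function.comp, slope_def_field, hT]
    have n4 : M - G x - (M - G c) ≠ 0 := fun hh => n3 (by linarith)
    field_simp
    ring
  have hconst : ∀ x, T x + x = T 0 + 0 := fun x =>
    is_const_of_deriv_eq_zero (f := fun x => T x + x)
      (fun y => ((hTder y).add (hasDerivAt_id y)).differentiableAt)
      (fun y => by
        have := ((hTder y).add (hasDerivAt_id y)).deriv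
        rw [neg_add_cancel] at this
        exact this) x 0
  refine ⟨T 0 / 2, fun t => ?_⟩
  rw [← hFT (T 0 / 2 + t)]
  congr 1
  linarith [hconst (T 0 / 2 + t)]

/-- If a PS measure `μ ∈ 𝒲(ℝⁿ)` is a product measure `μ₁ × ⋯ × μₙ` with continuous,
strictly positive one-dimensional densities `fᵢ`, then each `fᵢ` is symmetric. -/
theorem product_ps_measure_symmetric {n : ℕ} (F : Fin n → ℝ → ℝ)
    (f : En n → ℝ) (f' : En n → En n)
    (hprod : ∀ x : En n, f x = ∏ i, F i (x i))
    (hW : MemW f f') (hPS : IsPSMeasure f f')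
    (hcont : ∀ i, Continuous (F i)) (hpos : ∀ i t, 0 < F i t) :
    ∀ i : Fin n, ∃ m : ℝ, ∀ t : ℝ, F i (m - t) = F i (m + t) := by
  intro i
  have hint := fun j => integrable_factor hprod hW.2.1 hpos j
  have hside : 0 < sideMass F i := Finset.prod_pos fun j _ => by
    rw [integral_pos_iff_support_of_nonneg (fun t => (hpos j t).le) (hint j)]
    have : Function.support (F j) = univ := by
      ext t; simp [(hpos j t).ne']
    simp [this]
  have hle : ∀ c d, ∫ t in Ici d, F i t = ∫ t in Iio c, F i t → F i d ≤ F i c := by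
    intro c d hcd
    have h1 := perim_lt_le hprod hW hcont hpos i c
    have h2 := hPS (EuclideanSpace.single i 1) (by simp) {x | x i < c}
      (measurableSet_lt (contDiff_coord i).continuous.measurable
        measurable_const).nullMeasurableSet (h1.trans_lt ENNReal.ofReal_lt_top)
    rw [ehrhardSymm_lt hprod hcont hpos i (hint i) hcd,
      perim_halfSpace hprod hW hcont hpos] at h2
    have h3 := (ENNReal.ofReal_le_ofReal_iff
      (mul_nonneg (hpos i c).le hside.le)).1 (h2.trans h1)
    exact le_of_mul_le_mul_right h3 hside
  refine symmetric_of_tails (hcont i) (hpos i) (hint i) fun c d hcd => (hle c d hcd).antisymm ?_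
  -- The equal-tails relation between `c` and `d` is symmetric: pass to complements.
  refine hle d c ?_
  have e1 := integral_add_compl (μ := volume) (measurableSet_Ici (a := c)) (hint i)
  have e2 := integral_add_compl (μ := volume) (measurableSet_Ici (a := d)) (hint i)
  rw [compl_Ici] at e1 e2
  linarith

end
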